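/- arXiv:1307.2850 — 7 statements merged into one kernel-verified Lean document; each statement's English description precedes it below -/
import Mathlib

section
/- Let p be a prime number and n ≥ 1 a natural number. Then r(ℤ_p^n) = (p^{2n-1} + p^{n+1} - p^{n-1} + p^2 - p - 1) / (p^2 - 1); equivalently, (p^2 - 1) · r(ℤ_p^n) = p^{2n-1} + p^{n+1} - p^{n-1} + p^2 - p - 1. -/
/-!
The moves `(g, k) ↦ (k, -g)` and `(g, k) ↦ (g, k + m • g)` generate the action of `SL₂(ℤ)` on
columns of length two with entries in `G`, so `r(G)` counts `SL₂(ℤ)`-orbits. If `G = V` is a vector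
space over `𝔽_p`, these are the orbits of `SL₂(𝔽_p)`, since `SL₂(𝔽_p)` is generated by
transvections, which lift to `ℤ`. They are counted by Burnside's lemma.

Put `N = |V|`. In coordinates on `V`, a matrix `g` fixes `N ^ dim ker (g - 1)` columns. The kernel
has dimension `2` if `g = 1`, dimension `1` if `g ≠ 1` has trace `2`, and is trivial otherwise,
because `det (g - 1) = 2 - tr g`. As `SL₂(𝔽_p)` has `p³ - p` elements, `p²` of them of trace `2`,
`(p³ - p) * r(V) = N² + (p² - 1) * N + (p³ - p - p²)`.
-/

/-- The relation on `G × G` whose generated equivalence relation identifies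
`(g,k) ~ (k,-g)` and `(g,k) ~ (g, k + m • g)` for all integers `m`. -/
def pairRel (G : Type*) [AddCommGroup G] : G × G → G × G → Prop :=
  fun x y => y = (x.2, -x.1) ∨ ∃ m : ℤ, y = (x.1, x.2 + m • x.1)

/-- `r G` is the number of equivalence classes of `G × G` under the equivalence
relation generated by `pairRel G`. -/
noncomputable def numClasses (G : Type*) [AddCommGroup G] : ℕ :=
  Nat.card (Quot (pairRel G))

open Matrix MulAction Module
open scoped MatrixGroups Matrix.Module

/-- The action of `SL(ι, R)` by matrix multiplication on columns with entries in an `R`-module,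
through which classes of pairs become orbits. It is only a local instance because for `V = R` it
duplicates Mathlib's action of `SL(ι, R)` on `ι → R`. -/
abbrev columnAction (ι R V : Type*) [Fintype ι] [DecidableEq ι] [CommRing R] [AddCommGroup V]
    [Module R V] : MulAction (SpecialLinearGroup ι R) (ι → V) :=
  MulAction.compHom _ SpecialLinearGroup.coeMonoidHom

attribute [local instance] columnAction

section ColumnAction

variable {ι R V : Type*} [Fintype ι] [DecidableEq ι] [CommRing R] [AddCommGroup V] [Module R V]

lemma columnAction_smul_apply (g : SpecialLinearGroup ι R) (v : ι → V) (i : ι) :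
    (g • v) i = ∑ j, g i j • v j :=
  rfl

lemma columnAction_map_intCast_smul (g : SpecialLinearGroup ι ℤ) (v : ι → V) :
    SpecialLinearGroup.map (Int.castRingHom R) g • v = g • v := by
  ext i
  simp [columnAction_smul_apply, Int.cast_smul_eq_zsmul]

lemma columnAction_fixedBy (g : SpecialLinearGroup ι R) :
    fixedBy (ι → V) g = {v | ((g : Matrix ι ι R) - 1) • v = 0} := by
  ext v
  rw [mem_fixedBy, Set.mem_ofPred_eq, sub_smul, one_smul, sub_eq_zero]
  rfl

end ColumnAction

section IntegralOrbits

variable {G : Type*} [AddCommGroup G]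

/-- The class of the pair `(v 0, v 1)`, with the pair written as a column so that `SL(2, ℤ)` acts
on it. -/
def pairClass (v : Fin 2 → G) : Quot (pairRel G) :=
  Quot.mk _ (v 0, v 1)

lemma pairClass_rotate (x y : G) : pairClass ![y, -x] = pairClass ![x, y] :=
  (Quot.sound (r := pairRel G) (a := (x, y)) (b := (y, -x)) (Or.inl rfl)).symm

lemma pairClass_shear (m : ℤ) (x y : G) : pairClass ![x, y + m • x] = pairClass ![x, y] :=
  (Quot.sound (r := pairRel G) (a := (x, y)) (b := (x, y + m • x)) (Or.inr ⟨m, rfl⟩)).symm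

lemma pairClass_S_smul (v : Fin 2 → G) : pairClass (ModularGroup.S • v) = pairClass v := by
  have hS : ModularGroup.S • v = ![-v 1, v 0] := by
    ext i
    fin_cases i <;> simp [columnAction_smul_apply]
  calc
    pairClass (ModularGroup.S • v) = pairClass ![v 0, - -v 1] := by rw [hS, pairClass_rotate]
    _ = pairClass v := by rw [neg_neg]; rfl

lemma pairClass_T_smul (v : Fin 2 → G) : pairClass (ModularGroup.T • v) = pairClass v := by
  have hT : ModularGroup.T • v = ![v 0 + v 1, v 1] := by
    ext i
    fin_cases i <;> simp [columnAction_smul_apply]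
  calc
    pairClass (ModularGroup.T • v) = pairClass ![v 1, -(v 0 + v 1)] := by rw [hT, pairClass_rotate]
    _ = pairClass ![v 1, -v 0 + (-1 : ℤ) • v 1] := by congr 3; module
    _ = pairClass ![v 0, v 1] := by rw [pairClass_shear, pairClass_rotate]

lemma pairClass_smul (g : SL(2, ℤ)) (v : Fin 2 → G) : pairClass (g • v) = pairClass v := by
  have hg : g ∈ Subgroup.closure {ModularGroup.S, ModularGroup.T} := by
    simp [SpecialLinearGroup.SL2Z_generators]
  induction hg using Subgroup.closure_induction generalizing v with
  | mem h hh =>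
    obtain rfl | rfl := hh
    exacts [pairClass_S_smul v, pairClass_T_smul v]
  | one => rw [one_smul]
  | mul g h _ _ ihg ihh => rw [mul_smul, ihg, ihh]
  | inv g _ ih => rw [← ih, smul_inv_smul]

lemma mem_orbit_of_pairRel {v w : G × G} (h : pairRel G v w) :
    ![w.1, w.2] ∈ orbit SL(2, ℤ) ![v.1, v.2] := by
  obtain rfl | ⟨m, rfl⟩ := h
  · refine ⟨ModularGroup.S⁻¹, ?_⟩
    ext i
    fin_cases i <;> simp [columnAction_smul_apply, adjugate_fin_two]
  · refine ⟨SpecialLinearGroup.transvection one_ne_zero m, ?_⟩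
    ext i
    fin_cases i <;>
      simp [columnAction_smul_apply, SpecialLinearGroup.transvection_coe, add_comm]

theorem numClasses_eq_natCard_orbits_int (G : Type*) [AddCommGroup G] :
    numClasses G = Nat.card (orbitRel.Quotient SL(2, ℤ) (Fin 2 → G)) :=
  Nat.card_congr
    { toFun := Quot.map (fun v ↦ ![v.1, v.2]) fun _ _ h ↦
        (orbitRel _ _).symm (mem_orbit_of_pairRel h)
      invFun := Quotient.lift pairClass <| by
        rintro _ v ⟨g, rfl⟩
        exact pairClass_smul g v
      left_inv := by rintro ⟨v⟩; rfl
      right_inv := by rintro ⟨v⟩; exact congrArg (Quot.mk _) (List.ofFn_inj.mp rfl) }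

end IntegralOrbits

section Reduction

lemma orbitRel_eq_of_surjective {G H X : Type*} [Group G] [Group H] [MulAction G X] [MulAction H X]
    {f : G →* H} (hf : Function.Surjective f) (hsmul : ∀ g (x : X), f g • x = g • x) :
    orbitRel G X = orbitRel H X := by
  ext x y
  simp only [orbitRel_apply, mem_orbit_iff, hf.exists, hsmul]

lemma specialLinearGroup_fin_two_map_surjective {R K : Type*} [CommRing R] [Field K] {f : R →+* K}
    (hf : Function.Surjective f) :
    Function.Surjective (SpecialLinearGroup.map (n := Fin 2) f) := by
  intro g
  rw [← MonoidHom.mem_range]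
  induction g using SL2.transvection_induction with
  | htransvec i j hij c =>
    obtain ⟨c, rfl⟩ := hf c
    refine ⟨SpecialLinearGroup.transvection hij c, ?_⟩
    ext k l
    simp [SpecialLinearGroup.transvection_coe, Matrix.one_apply, Matrix.single_apply, apply_ite f]
  | hmul g h hg hh => exact mul_mem hg hh

theorem numClasses_eq_natCard_orbits_zmod (p : ℕ) [Fact p.Prime] (V : Type*) [AddCommGroup V]
    [Module (ZMod p) V] :
    numClasses V = Nat.card (orbitRel.Quotient SL(2, ZMod p) (Fin 2 → V)) := by
  have hsurj := specialLinearGroup_fin_two_map_surjective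
    (ZMod.ringHom_surjective (Int.castRingHom (ZMod p)))
  rw [numClasses_eq_natCard_orbits_int, orbitRel.Quotient,
    orbitRel_eq_of_surjective hsurj columnAction_map_intCast_smul]

end Reduction

section MatrixKernel

variable {ι K V : Type*} [Fintype ι] [DecidableEq ι] [Field K] [AddCommGroup V] [Module K V]

lemma matrix_smul_eq_zero_iff_forall_repr {κ R : Type*} [CommRing R] [Module R V]
    (b : Basis κ R V) (A : Matrix ι ι R) (v : ι → V) :
    A • v = 0 ↔ ∀ k, A *ᵥ (fun i ↦ b.repr (v i) k) = 0 := by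
  simp only [funext_iff, Pi.zero_apply, Matrix.Module.smul_apply, b.ext_elem_iff, mulVec,
    dotProduct]
  rw [forall_comm]
  simp

lemma natCard_setOf_matrix_smul_eq_zero [Module.Finite K V] (A : Matrix ι ι K) :
    Nat.card {v : ι → V | A • v = 0} = Nat.card V ^ finrank K (LinearMap.ker A.mulVecLin) := by
  let b := finBasis K V
  let coords : (ι → V) ≃ (Fin (finrank K V) → ι → K) :=
    ((Equiv.refl ι).arrowCongr b.equivFun.toEquiv).trans (Equiv.piComm _)
  have e : {v : ι → V | A • v = 0} ≃ (Fin (finrank K V) → LinearMap.ker A.mulVecLin) :=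
    (coords.subtypeEquiv (matrix_smul_eq_zero_iff_forall_repr b A)).trans
      Equiv.subtypePiEquivPi
  rw [Nat.card_congr e, Nat.card_fun, Nat.card_fin, natCard_eq_pow_finrank (K := K),
    natCard_eq_pow_finrank (K := K) (V := V), pow_right_comm]

lemma finrank_ker_mulVecLin_eq_zero_iff {A : Matrix ι ι K} :
    finrank K (LinearMap.ker A.mulVecLin) = 0 ↔ A.det ≠ 0 := by
  rw [Submodule.finrank_eq_zero, ker_mulVecLin_eq_bot_iff, ne_eq, ← exists_mulVec_eq_zero_iff]
  grind

omit [DecidableEq ι] in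
lemma finrank_ker_mulVecLin_lt {A : Matrix ι ι K} (hA : A ≠ 0) :
    finrank K (LinearMap.ker A.mulVecLin) < Fintype.card ι := by
  classical
  rw [← finrank_fintype_fun_eq_card K]
  refine Submodule.finrank_lt fun h ↦ hA ?_
  rwa [← toLin'_apply', LinearMap.ker_eq_top, map_eq_zero_iff _ toLin'.injective] at h

lemma det_sub_one_fin_two {R : Type*} [CommRing R] (g : SL(2, R)) :
    det ((g : Matrix (Fin 2) (Fin 2) R) - 1) = 2 - trace (g : Matrix (Fin 2) (Fin 2) R) := by
  have hdet := g.det_coe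
  rw [det_fin_two] at hdet
  simp only [det_fin_two, trace_fin_two, Matrix.sub_apply, one_apply_eq,
    one_apply_ne zero_ne_one, one_apply_ne one_ne_zero]
  linear_combination hdet

open Classical in
lemma finrank_ker_sub_one_fin_two (g : SL(2, K)) :
    finrank K (LinearMap.ker ((g : Matrix (Fin 2) (Fin 2) K) - 1).mulVecLin) =
      if g = 1 then 2 else if trace (g : Matrix (Fin 2) (Fin 2) K) = 2 then 1 else 0 := by
  split_ifs with hg ht
  · have hzero : (g : Matrix (Fin 2) (Fin 2) K) - 1 = 0 := by simp [hg]
    rw [hzero, mulVecLin_zero, LinearMap.ker_zero, finrank_top, finrank_fin_fun]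
  · have hne : (g : Matrix (Fin 2) (Fin 2) K) - 1 ≠ 0 := fun h ↦ hg (Subtype.ext (sub_eq_zero.1 h))
    have hdet : det ((g : Matrix (Fin 2) (Fin 2) K) - 1) = 0 := by
      rw [det_sub_one_fin_two, ht, sub_self]
    have hlt := finrank_ker_mulVecLin_lt hne
    have hpos := mt finrank_ker_mulVecLin_eq_zero_iff.1 (not_not.2 hdet)
    rw [Fintype.card_fin] at hlt
    lia
  · rw [finrank_ker_mulVecLin_eq_zero_iff, det_sub_one_fin_two]
    exact sub_ne_zero.2 (Ne.symm ht)

end MatrixKernel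

section Cardinalities

variable {ι R : Type*} [Fintype ι] [DecidableEq ι] [Nonempty ι] [CommRing R]

lemma generalLinearGroup_det_surjective :
    Function.Surjective (GeneralLinearGroup.det (n := ι) (R := R)) := by
  intro u
  obtain ⟨i⟩ := ‹Nonempty ι›
  let A : Matrix ι ι R := diagonal (Function.update 1 i (u : R))
  have hA : A.det = u := by simp [A, det_diagonal, Finset.prod_update_of_mem]
  exact ⟨GeneralLinearGroup.mk'' A (hA ▸ u.isUnit), Units.ext hA⟩

omit [Nonempty ι] in
lemma generalLinearGroup_ker_det :
    (GeneralLinearGroup.det (n := ι) (R := R)).ker = SpecialLinearGroup.toGL.range := by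
  ext g
  refine ⟨fun hg ↦ ⟨⟨g, congrArg Units.val hg⟩, Units.ext rfl⟩, ?_⟩
  rintro ⟨g, rfl⟩
  exact SpecialLinearGroup.coeToGL_det g

variable (ι R) in
lemma natCard_specialLinearGroup_mul_natCard_units :
    Nat.card (SpecialLinearGroup ι R) * Nat.card Rˣ = Nat.card (GL ι R) := by
  rw [← Subgroup.card_mul_index GeneralLinearGroup.det.ker, Subgroup.index_ker,
    MonoidHom.range_eq_top.2 generalLinearGroup_det_surjective, Subgroup.card_top,
    generalLinearGroup_ker_det,
    Nat.card_congr (MonoidHom.ofInjective SpecialLinearGroup.toGL_injective).toEquiv]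

variable (K : Type*) [Field K]

lemma natCard_specialLinearGroup_fin_two [Finite K] :
    (Nat.card SL(2, K) : ℤ) = Nat.card K ^ 3 - Nat.card K := by
  have := Fintype.ofFinite K
  have hcard := natCard_specialLinearGroup_mul_natCard_units (Fin 2) K
  have hq : 1 < Nat.card K := Finite.one_lt_card
  have hq2 : Nat.card K ≤ Nat.card K ^ 2 := Nat.le_self_pow two_ne_zero _
  simp only [card_GL_field, ← Nat.card_eq_fintype_card, Nat.card_units, Fin.prod_univ_two,
    Fin.val_zero, Fin.val_one, pow_zero, pow_one] at hcard
  zify [hq.le, hq2, hq.le.trans hq2] at hcard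
  have hq0 : (Nat.card K : ℤ) - 1 ≠ 0 := by lia
  exact mul_right_cancel₀ hq0 (by linear_combination hcard)

variable {K}

lemma sub_one_sq_of_trace_eq_two {g : SL(2, R)}
    (hg : trace (g : Matrix (Fin 2) (Fin 2) R) = 2) : (g 0 0 - 1) ^ 2 = -(g 0 1 * g 1 0) := by
  have hdet := g.det_coe
  rw [det_fin_two] at hdet
  rw [trace_fin_two] at hg
  linear_combination g 0 0 * hg - hdet

open Classical in
/-- Parametrizes the matrices of trace `2` in `SL(2, K)` by `K × K` in order to count them: the
first parameter is the upper right entry `b`, the second one is the lower left entry if `b = 0`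
(when the matrix is unitriangular) and the upper left entry otherwise. -/
noncomputable def traceTwoEquiv :
    {g : SL(2, K) // trace (g : Matrix (Fin 2) (Fin 2) K) = 2} ≃ K × K where
  toFun g := (g.1 0 1, if g.1 0 1 = 0 then g.1 1 0 else g.1 0 0)
  invFun x :=
    if hb : x.1 = 0 then
      ⟨SpecialLinearGroup.transvection one_ne_zero x.2, by
        simp [SpecialLinearGroup.transvection, Matrix.transvection]⟩
    else
      ⟨⟨!![x.2, x.1; -(x.2 - 1) ^ 2 / x.1, 2 - x.2], by
        rw [det_fin_two_of]
        field_simp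
        ring⟩, by simp [trace_fin_two]⟩
  left_inv := by
    rintro ⟨g, hg⟩
    have hsq := sub_one_sq_of_trace_eq_two hg
    rw [trace_fin_two] at hg
    by_cases hb : g 0 1 = 0
    · have ha : g 0 0 = 1 := by simpa [hb, sub_eq_zero] using hsq
      have hd : g 1 1 = 1 := by linear_combination hg - ha
      ext i j
      fin_cases i <;> fin_cases j <;> simp [hb, ha, hd, SpecialLinearGroup.transvection_coe]
    · have hc : -(g 0 0 - 1) ^ 2 / g 0 1 = g 1 0 := by rw [hsq, neg_neg, mul_div_cancel_left₀ _ hb]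
      have hd : 2 - g 0 0 = g 1 1 := by linear_combination -hg
      ext i j
      fin_cases i <;> fin_cases j <;> simp [hb, hc, hd]
  right_inv := by
    rintro ⟨b, t⟩
    by_cases hb : b = 0 <;> simp [hb, SpecialLinearGroup.transvection_coe]

lemma natCard_trace_eq_two :
    Nat.card {g : SL(2, K) // trace (g : Matrix (Fin 2) (Fin 2) K) = 2} = Nat.card K ^ 2 := by
  rw [Nat.card_congr traceTwoEquiv, Nat.card_prod, sq]

end Cardinalities

section Burnside

lemma sum_natCard_fixedBy (G X : Type*) [Group G] [Fintype G] [MulAction G X] [Finite X] :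
    ∑ g : G, Nat.card (fixedBy X g) = Nat.card (orbitRel.Quotient G X) * Nat.card G := by
  classical
  have := Fintype.ofFinite X
  simpa only [Nat.card_eq_fintype_card] using sum_card_fixedBy_eq_card_orbits_mul_card_group G X

variable (K V : Type*) [Field K] [AddCommGroup V] [Module K V]

variable {K} in
open Classical in
lemma natCard_fixedBy_fin_two [Module.Finite K V] (g : SL(2, K)) :
    (Nat.card (fixedBy (Fin 2 → V) g) : ℤ) =
      1 + (if trace (g : Matrix (Fin 2) (Fin 2) K) = 2 then (Nat.card V : ℤ) - 1 else 0) +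
        (if g = 1 then (Nat.card V : ℤ) ^ 2 - Nat.card V else 0) := by
  rw [columnAction_fixedBy, natCard_setOf_matrix_smul_eq_zero, finrank_ker_sub_one_fin_two]
  by_cases hg : g = 1
  · simp [hg]
  · by_cases ht : trace (g : Matrix (Fin 2) (Fin 2) K) = 2 <;> simp [hg, ht]

theorem natCard_orbits_fin_two [Finite K] [Finite V] :
    ((Nat.card K : ℤ) ^ 3 - Nat.card K) * Nat.card (orbitRel.Quotient SL(2, K) (Fin 2 → V)) =
      (Nat.card V : ℤ) ^ 2 + ((Nat.card K : ℤ) ^ 2 - 1) * Nat.card V +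
        ((Nat.card K : ℤ) ^ 3 - Nat.card K - (Nat.card K : ℤ) ^ 2) := by
  classical
  have := Fintype.ofFinite SL(2, K)
  have burnside := congrArg (Nat.cast (R := ℤ)) (sum_natCard_fixedBy SL(2, K) (Fin 2 → V))
  have card_trace : (Finset.univ.filter fun g : SL(2, K) ↦
      trace (g : Matrix (Fin 2) (Fin 2) K) = 2).card = Nat.card K ^ 2 := by
    rw [← natCard_trace_eq_two, Nat.card_eq_fintype_card, Fintype.card_subtype]
  simp only [Nat.cast_sum, natCard_fixedBy_fin_two, Finset.sum_add_distrib, Finset.sum_const,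
    Finset.card_univ, ← Nat.card_eq_fintype_card, ← Finset.sum_filter, card_trace, nsmul_eq_mul,
    Finset.filter_eq', Finset.mem_univ, if_true, Finset.card_singleton, Nat.cast_one, Nat.cast_mul,
    Nat.cast_pow, natCard_specialLinearGroup_fin_two] at burnside
  linear_combination -burnside

end Burnside

theorem numClasses_zmod_pow_general {p n : ℕ} [Fact p.Prime] (hn : 1 ≤ n) {V : Type*}
    [AddCommGroup V] [Module (ZMod p) V] (hV : finrank (ZMod p) V = n) :
    ((p : ℤ) ^ 2 - 1) * numClasses V =
      (p : ℤ) ^ (2 * n - 1) + (p : ℤ) ^ (n + 1) - (p : ℤ) ^ (n - 1)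
        + (p : ℤ) ^ 2 - p - 1 := by
  have : Module.Finite (ZMod p) V := finite_of_finrank_pos (by lia)
  have : Finite V := finite_of_finite (ZMod p)
  have hcard := natCard_orbits_fin_two (ZMod p) V
  rw [← numClasses_eq_natCard_orbits_zmod, natCard_eq_pow_finrank (K := ZMod p) (V := V), hV,
    Nat.card_zmod] at hcard
  obtain ⟨m, rfl⟩ := Nat.exists_eq_add_of_le' hn
  have hp : (p : ℤ) ≠ 0 := mod_cast (Fact.out : p.Prime).ne_zero
  refine mul_left_cancel₀ hp ?_
  rw [show 2 * (m + 1) - 1 = 2 * m + 1 by lia, Nat.add_sub_cancel]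
  push_cast at hcard
  linear_combination hcard

theorem numClasses_zmod_pow (p n : ℕ) (hp : p.Prime) (hn : 1 ≤ n) :
    ((p : ℤ) ^ 2 - 1) * numClasses (Fin n → ZMod p) =
      (p : ℤ) ^ (2 * n - 1) + (p : ℤ) ^ (n + 1) - (p : ℤ) ^ (n - 1)
        + (p : ℤ) ^ 2 - p - 1 := by
  have : Fact p.Prime := ⟨hp⟩
  exact numClasses_zmod_pow_general hn (finrank_fin_fun (ZMod p))
end

section
/- For every natural number n ≥ 1, r(ℤ_2^n) = (2^n + 1)(2^{n-1} + 1) / 3; equivalently, 3 · r(ℤ_2^n) = (2^n + 1)(2^{n-1} + 1). -/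
section ZeroSumSym

/-- The multisets of size `k` in `G` whose sum is zero. -/
def zeroSumSym (G : Type*) [AddCommMonoid G] (k : ℕ) : Set (Sym G k) :=
  {s | (s : Multiset G).sum = 0}

lemma sum_sym_map_add_right {G : Type*} [AddCommMonoid G] {k : ℕ} (s : Sym G k) (v : G) :
    (s.map (· + v) : Multiset G).sum = (s : Multiset G).sum + k • v := by
  simp [Multiset.sum_map_add]

variable {G : Type*} [AddCommGroup G] {k : ℕ}

lemma bijective_translate_zeroSumSym (hk : Function.Bijective fun v : G => k • v) :
    Function.Bijective fun x : G × zeroSumSym G k => x.2.1.map (· + x.1) := by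
  constructor
  · rintro ⟨v, s, hs⟩ ⟨w, t, ht⟩ (h : s.map (· + v) = t.map (· + w))
    obtain rfl : v = w := hk.injective <| by
      simpa [sum_sym_map_add_right, Set.mem_ofPred.mp hs, Set.mem_ofPred.mp ht] using
        congrArg (fun u : Sym G k => (u : Multiset G).sum) h
    obtain rfl : s = t := Sym.map_injective (add_left_injective v) k h
    rfl
  · intro s
    obtain ⟨v, hv : k • v = (s : Multiset G).sum⟩ := hk.surjective (s : Multiset G).sum
    refine ⟨(v, ⟨s.map (· + -v), ?_⟩), by simp⟩
    rw [zeroSumSym, Set.mem_ofPred, sum_sym_map_add_right, smul_neg, hv, add_neg_cancel]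

lemma card_mul_card_zeroSumSym [Finite G] (hk : Function.Bijective fun v : G => k • v) :
    Nat.card G * Nat.card (zeroSumSym G k) = (Nat.card G).multichoose k := by
  classical
  have := Fintype.ofFinite G
  rw [← Nat.card_prod, Nat.card_eq_of_bijective _ (bijective_translate_zeroSumSym hk),
    Nat.card_eq_fintype_card, Nat.card_eq_fintype_card, Sym.card_sym_eq_multichoose]

end ZeroSumSym

lemma six_mul_multichoose_three (n : ℕ) : 6 * n.multichoose 3 = n * ((n + 1) * (n + 2)) := by
  have h := Nat.descFactorial_eq_factorial_mul_choose (n + 2) 3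
  simp only [Nat.descFactorial_succ, Nat.descFactorial_zero, Nat.reduceSubDiff,
    Nat.add_sub_cancel, Nat.sub_zero, mul_one] at h
  rw [Nat.multichoose_eq, show n + 3 - 1 = n + 2 from rfl, show 6 = Nat.factorial 3 from rfl, ← h]

section PairRel

variable {G : Type*} [AddCommGroup G]

lemma mk_pairRel_eq_mk_neg (a b : G) :
    Quot.mk (pairRel G) (a, b) = Quot.mk (pairRel G) (b, -a) :=
  Quot.sound (.inl rfl)

lemma mk_pairRel_eq_mk_add (a b : G) :
    Quot.mk (pairRel G) (a, b) = Quot.mk (pairRel G) (a, a + b) :=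
  Quot.sound (.inr ⟨1, by rw [one_smul, add_comm]⟩)

/-- The multiset `{a, b, a + b}` attached to a pair `(a, b)`; in an elementary abelian
2-group it is a complete invariant of the class of the pair. -/
def pairTriple (p : G × G) : Sym G 3 :=
  p.1 ::ₛ p.2 ::ₛ (p.1 + p.2) ::ₛ .nil

lemma pairTriple_swap (a b : G) : pairTriple (b, a) = pairTriple (a, b) := by
  rw [pairTriple, pairTriple, Sym.cons_swap, add_comm b a]

lemma exists_mk_pairRel_eq_of_mem_pairTriple {p : G × G} {c : G} (hc : c ∈ pairTriple p) :
    ∃ d, Quot.mk (pairRel G) p = Quot.mk (pairRel G) (c, d) := by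
  obtain ⟨a, b⟩ := p
  obtain rfl | rfl | rfl : c = a ∨ c = b ∨ c = a + b := by simpa [pairTriple] using hc
  · exact ⟨b, rfl⟩
  · exact ⟨-a, mk_pairRel_eq_mk_neg a c⟩
  · exact ⟨-a, (mk_pairRel_eq_mk_add a b).trans (mk_pairRel_eq_mk_neg a _)⟩

lemma mk_pairRel_eq_of_pairTriple_eq_of_fst_eq {a b d : G}
    (h : pairTriple (a, b) = pairTriple (a, d)) :
    Quot.mk (pairRel G) (a, b) = Quot.mk (pairRel G) (a, d) := by
  have h_rest : b ::ₛ (a + b) ::ₛ .nil = d ::ₛ (a + d) ::ₛ .nil := (Sym.cons_inj_right a _ _).mp h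
  have hd : d ∈ b ::ₛ (a + b) ::ₛ .nil := h_rest ▸ Sym.mem_cons_self d _
  obtain rfl | rfl : d = b ∨ d = a + b := by simpa using hd
  · rfl
  · exact mk_pairRel_eq_mk_add a b

end PairRel

section ElementaryTwoGroup

variable {V : Type*} [AddCommGroup V] [Module (ZMod 2) V]

lemma zsmul_eq_zero_or_eq_self (m : ℤ) (v : V) : m • v = 0 ∨ m • v = v := by
  rw [← Int.cast_smul_eq_zsmul (ZMod 2)]
  generalize (m : ZMod 2) = c
  fin_cases c
  · exact .inl (zero_smul _ v)
  · exact .inr (one_smul _ v)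

lemma three_nsmul_eq_self (v : V) : 3 • v = v := by
  rw [succ_nsmul, ZModModule.char_nsmul_eq_zero 2, zero_add]

lemma zmodTwo_add_cancel_left (a b : V) : a + (a + b) = b := by
  rw [← add_assoc, ZModModule.add_self, zero_add]

lemma pairTriple_mem_zeroSumSym (p : V × V) : pairTriple p ∈ zeroSumSym V 3 := by
  have h_sum : p.1 + (p.2 + (p.1 + p.2)) = 0 := by
    rw [← add_assoc, ZModModule.add_self]
  simpa [zeroSumSym, pairTriple, Sym.coe_cons] using h_sum

lemma pairTriple_add (a b : V) : pairTriple (a, a + b) = pairTriple (a, b) := by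
  rw [pairTriple, pairTriple, zmodTwo_add_cancel_left, Sym.cons_swap (a + b)]

lemma pairTriple_eq_of_pairRel {p q : V × V} (h : pairRel V p q) :
    pairTriple p = pairTriple q := by
  obtain ⟨a, b⟩ := p
  rcases h with rfl | ⟨m, rfl⟩
  · rw [ZModModule.neg_eq_self, pairTriple_swap]
  · rcases zsmul_eq_zero_or_eq_self m a with hm | hm
    · rw [hm, add_zero]
    · rw [hm, add_comm, pairTriple_add]

lemma mk_pairRel_eq_of_pairTriple_eq {p q : V × V} (h : pairTriple p = pairTriple q) :
    Quot.mk (pairRel V) p = Quot.mk (pairRel V) q := by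
  obtain ⟨c, d⟩ := q
  have hc : c ∈ pairTriple p := h ▸ Sym.mem_cons_self c _
  obtain ⟨e, he⟩ := exists_mk_pairRel_eq_of_mem_pairTriple hc
  have h_pe : pairTriple p = pairTriple (c, e) :=
    congrArg (Quot.lift pairTriple fun _ _ => pairTriple_eq_of_pairRel) he
  exact he.trans (mk_pairRel_eq_of_pairTriple_eq_of_fst_eq (h_pe.symm.trans h))

lemma exists_pairTriple_eq {s : Sym V 3} (hs : s ∈ zeroSumSym V 3) : ∃ p, pairTriple p = s := by
  obtain ⟨a, b, c, habc⟩ := Multiset.card_eq_three.mp s.card_coe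
  have h_sum : a + b + c = 0 := by
    simpa [zeroSumSym, habc, add_assoc] using hs
  obtain rfl : a + b = c := by rw [eq_neg_of_add_eq_zero_left h_sum, ZModModule.neg_eq_self]
  exact ⟨(a, b), Sym.ext habc.symm⟩

lemma card_zeroSumSym_three : Nat.card (zeroSumSym V 3) = numClasses V := by
  let tripleOfClass : Quot (pairRel V) → zeroSumSym V 3 :=
    Quot.lift (fun p => ⟨pairTriple p, pairTriple_mem_zeroSumSym p⟩)
      fun _ _ h => Subtype.ext (pairTriple_eq_of_pairRel h)
  refine (Nat.card_eq_of_bijective tripleOfClass ⟨?_, ?_⟩).symm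
  · rintro ⟨p⟩ ⟨q⟩ h
    exact mk_pairRel_eq_of_pairTriple_eq (congrArg Subtype.val h)
  · rintro ⟨s, hs⟩
    obtain ⟨p, rfl⟩ := exists_pairTriple_eq hs
    exact ⟨Quot.mk _ p, rfl⟩

end ElementaryTwoGroup

theorem numClasses_zmod_two_pow_general (V : Type*) [AddCommGroup V] [Module (ZMod 2) V]
    [Finite V] : 6 * numClasses V = (Nat.card V + 1) * (Nat.card V + 2) := by
  have h_three : Function.Bijective fun v : V => 3 • v := by
    simp only [three_nsmul_eq_self]
    exact Function.bijective_id
  have h_count : Nat.card V * numClasses V = (Nat.card V).multichoose 3 := by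
    rw [← card_zeroSumSym_three, card_mul_card_zeroSumSym h_three]
  apply Nat.eq_of_mul_eq_mul_left (Nat.card_pos (α := V))
  rw [mul_left_comm, h_count, six_mul_multichoose_three]

theorem numClasses_zmod_two_pow (n : ℕ) (hn : 1 ≤ n) :
    3 * numClasses (Fin n → ZMod 2) = (2 ^ n + 1) * (2 ^ (n - 1) + 1) := by
  obtain ⟨m, rfl⟩ := Nat.exists_eq_add_of_le' hn
  have h := numClasses_zmod_two_pow_general (Fin (m + 1) → ZMod 2)
  rw [Nat.card_fun, Nat.card_zmod, Nat.card_fin, pow_succ] at h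
  rw [Nat.add_sub_cancel, pow_succ]
  linarith
end

section
/- Let p be a prime number and n ≥ 1 a natural number. Then r(ℤ_p^{n+1}) - r(ℤ_p^n) = p^{n-1}(p^n + p - 1). -/
open MulAction Matrix.SpecialLinearGroup
open scoped MatrixGroups

namespace pairRel

section AddCommGroup

variable {G : Type*} [AddCommGroup G] (g k : G)

lemma mk_swap : Quot.mk (pairRel G) (k, -g) = Quot.mk (pairRel G) (g, k) :=
  .symm <| Quot.sound <| .inl rfl

lemma mk_add_zsmul (m : ℤ) :
    Quot.mk (pairRel G) (g, k + m • g) = Quot.mk (pairRel G) (g, k) :=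
  .symm <| Quot.sound <| .inr ⟨m, rfl⟩

lemma mk_zsmul_add (m : ℤ) :
    Quot.mk (pairRel G) (g + m • k, k) = Quot.mk (pairRel G) (g, k) :=
  calc Quot.mk (pairRel G) (g + m • k, k)
    _ = Quot.mk (pairRel G) (k, -g + -m • k) := by rw [← mk_swap, neg_add, neg_smul]
    _ = Quot.mk (pairRel G) (g, k) := by rw [mk_add_zsmul, mk_swap]

end AddCommGroup

/-- The two rows of a `2 × ι` matrix given by its columns. `SL(2, R)` acts on the columns, whereas
`pairRel` relates pairs of rows. -/
def rows {ι R : Type*} : (ι → Fin 2 → R) ≃ (ι → R) × (ι → R) where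
  toFun v := (fun k ↦ v k 0, fun k ↦ v k 1)
  invFun x k := ![x.1 k, x.2 k]
  left_inv v := by
    ext k i
    fin_cases i <;> rfl

lemma rows_apply {ι R : Type*} (v : ι → Fin 2 → R) : rows v = (fun k ↦ v k 0, fun k ↦ v k 1) :=
  rfl

lemma rows_smul {ι R : Type*} [CommRing R] (g : SL(2, R)) (v : ι → Fin 2 → R) :
    rows (g • v) = (g 0 0 • (rows v).1 + g 0 1 • (rows v).2,
      g 1 0 • (rows v).1 + g 1 1 • (rows v).2) := by
  ext k <;> simp [rows_apply, Matrix.SpecialLinearGroup.smul_def, Matrix.mulVec, dotProduct]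

variable {p : ℕ} {ι : Type*}

lemma mk_rows_transvection_smul {i j : Fin 2} (hij : i ≠ j) (c : ZMod p)
    (v : ι → Fin 2 → ZMod p) :
    Quot.mk (pairRel (ι → ZMod p)) (rows (transvection hij c • v)) =
      Quot.mk (pairRel (ι → ZMod p)) (rows v) := by
  obtain ⟨m, rfl⟩ := ZMod.intCast_surjective c
  fin_cases i <;> fin_cases j
  · exact absurd rfl hij
  · convert mk_zsmul_add (rows v).1 (rows v).2 m using 2
    simp [rows_smul, transvection_coe, Int.cast_smul_eq_zsmul]
  · convert mk_add_zsmul (rows v).1 (rows v).2 m using 2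
    simp [rows_smul, transvection_coe, Int.cast_smul_eq_zsmul, add_comm]
  · exact absurd rfl hij

lemma mk_rows_smul [Fact p.Prime] (g : SL(2, ZMod p)) (v : ι → Fin 2 → ZMod p) :
    Quot.mk (pairRel (ι → ZMod p)) (rows (g • v)) = Quot.mk (pairRel (ι → ZMod p)) (rows v) := by
  induction g using Matrix.SL2.transvection_induction generalizing v with
  | htransvec i j hij c => exact mk_rows_transvection_smul hij c v
  | hmul g h hg hh => rw [mul_smul, hg, hh]

lemma rows_symm_mem_orbit {x y : (ι → ZMod p) × (ι → ZMod p)} (h : pairRel (ι → ZMod p) x y) :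
    rows.symm y ∈ orbit SL(2, ZMod p) (rows.symm x) := by
  rcases h with rfl | ⟨m, rfl⟩
  · refine ⟨⟨!![0, 1; -1, 0], by simp⟩, rows.injective ?_⟩
    exact (rows_smul _ _).trans (by simp)
  · refine ⟨transvection one_ne_zero (m : ZMod p), rows.injective ?_⟩
    simp [rows_smul, transvection_coe, Int.cast_smul_eq_zsmul, add_comm]

/-- The classes of `pairRel` on `(ℤ/p)^ι` as orbits of `SL(2, ℤ/p)`; the inverse is well defined
because transvections generate `SL(2, ℤ/p)`. -/
def quotEquivOrbits (p : ℕ) [Fact p.Prime] (ι : Type*) :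
    Quot (pairRel (ι → ZMod p)) ≃ orbitRel.Quotient SL(2, ZMod p) (ι → Fin 2 → ZMod p) where
  toFun := Quot.lift (fun x ↦ ⟦rows.symm x⟧) fun _ _ h ↦
    .symm <| Quotient.sound <| orbitRel_apply.mpr <| rows_symm_mem_orbit h
  invFun := Quotient.lift (fun v ↦ Quot.mk _ (rows v)) fun _ v ⟨g, hg⟩ ↦ hg ▸ mk_rows_smul g v
  left_inv := by
    rintro ⟨x⟩
    exact congrArg (Quot.mk _) (rows.apply_symm_apply x)
  right_inv := by
    rintro ⟨v⟩
    exact congrArg (Quotient.mk _) (rows.symm_apply_apply v)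

end pairRel

section Burnside

variable (G X : Type*) [Group G] [MulAction G X]

variable {G} in
lemma fixedBy_pi (ι : Type*) (g : G) : fixedBy (ι → X) g = Set.univ.pi fun _ ↦ fixedBy X g := by
  ext v
  simp [funext_iff]

variable [Fintype G] [Finite X]

lemma sum_natCard_fixedBy_eq_card_orbits_mul_card_group :
    ∑ g : G, Nat.card (fixedBy X g) = Nat.card (orbitRel.Quotient G X) * Nat.card G := by
  classical
  have := Fintype.ofFinite X
  have := Fintype.ofFinite (orbitRel.Quotient G X)
  simpa only [Nat.card_eq_fintype_card] using sum_card_fixedBy_eq_card_orbits_mul_card_group G X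

lemma sum_card_fixedBy_pow_eq_card_orbits_mul_card_group (ι : Type*) [Finite ι] :
    ∑ g : G, Nat.card (fixedBy X g) ^ Nat.card ι =
      Nat.card (orbitRel.Quotient G (ι → X)) * Nat.card G := by
  simp only [← sum_natCard_fixedBy_eq_card_orbits_mul_card_group, fixedBy_pi,
    Nat.card_congr (Equiv.Set.univPi _), Nat.card_fun]

end Burnside

lemma card_fixedSubmodule_of_ne_id {K V : Type*} [Field K] [Finite K] [AddCommGroup V]
    [Module K V] (hV : Module.finrank K V = 2) {f : V →ₗ[K] V} (hf : f ≠ .id) :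
    Nat.card f.fixedSubmodule = 1 ∨ Nat.card f.fixedSubmodule = Nat.card K := by
  have : FiniteDimensional K V := .of_finrank_eq_succ hV
  have hlt : Module.finrank K f.fixedSubmodule < 2 :=
    hV ▸ Submodule.finrank_lt (mt LinearMap.fixedSubmodule_eq_top_iff.mp hf)
  rw [Module.natCard_eq_pow_finrank (K := K)]
  interval_cases Module.finrank K f.fixedSubmodule <;> simp

lemma transvection_injective {n R : Type*} [DecidableEq n] [Fintype n] [CommRing R] {i j : n}
    (hij : i ≠ j) : Function.Injective (transvection (F := R) hij) := fun a b h ↦ by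
  simpa [transvection_coe] using congrArg (fun g ↦ g i j) h

lemma coe_stabilizer_single_zero (R : Type*) [CommRing R] :
    (stabilizer SL(2, R) (Pi.single 0 1 : Fin 2 → R) : Set SL(2, R)) =
      Set.range (transvection zero_ne_one) := by
  ext g
  constructor
  · intro hg
    have h00 : g 0 0 = 1 := by simpa [Matrix.SpecialLinearGroup.smul_def] using congrFun hg 0
    have h10 : g 1 0 = 0 := by simpa [Matrix.SpecialLinearGroup.smul_def] using congrFun hg 1
    have h11 : g 1 1 = 1 := by simpa [Matrix.det_fin_two, h00, h10, -det_coe] using g.det_coe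
    refine ⟨g 0 1, ?_⟩
    ext i j
    fin_cases i <;> fin_cases j <;> simp [transvection_coe, h00, h10, h11]
  · rintro ⟨c, rfl⟩
    exact transvection_smul_single_fst zero_ne_one c

section Field

variable (K : Type*) [Field K]

lemma orbit_single_zero : orbit SL(2, K) (Pi.single 0 1 : Fin 2 → K) = {0}ᶜ := by
  ext v
  rw [Set.mem_compl_singleton_iff]
  constructor
  · rintro ⟨g, rfl⟩
    exact (smul_ne_zero_iff_ne g).mpr <| by simp
  · intro hv
    have hcop : IsCoprime (v 0) (v 1) := by
      obtain ⟨i, hi⟩ := Function.ne_iff.mp hv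
      fin_cases i
      · exact ⟨(v 0)⁻¹, 0, by simpa using inv_mul_cancel₀ hi⟩
      · exact ⟨0, (v 1)⁻¹, by simpa using inv_mul_cancel₀ hi⟩
    obtain ⟨g, h0, h1⟩ := hcop.exists_SL2_col 0
    refine ⟨g, funext fun i ↦ ?_⟩
    fin_cases i <;> simp [Matrix.SpecialLinearGroup.smul_def, h0, h1]

lemma card_orbits_SL_two : Nat.card (orbitRel.Quotient SL(2, K) (Fin 2 → K)) = 2 := by
  let e : Fin 2 → K := Pi.single 0 1
  have mk_eq_iff (v : Fin 2 → K) :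
      (⟦v⟧ : orbitRel.Quotient SL(2, K) (Fin 2 → K)) = ⟦e⟧ ↔ v ≠ 0 := by
    rw [Quotient.eq, orbitRel_apply, orbit_single_zero, Set.mem_compl_singleton_iff]
  refine (Nat.card_eq_two_iff' ⟦e⟧).mpr ⟨⟦0⟧, by simp [mk_eq_iff], ?_⟩
  rintro ⟨v⟩ hv
  exact congrArg _ (not_not.mp (mt (mk_eq_iff v).mpr hv))

lemma card_SL_two [Finite K] : Nat.card SL(2, K) = (Nat.card K ^ 2 - 1) * Nat.card K := by
  let e : Fin 2 → K := Pi.single 0 1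
  have hstab : Nat.card (stabilizer SL(2, K) e) = Nat.card K := by
    rw [← SetLike.coe_sort_coe, coe_stabilizer_single_zero,
      Nat.card_range_of_injective (transvection_injective _)]
  have horb : Nat.card (orbit SL(2, K) e) = Nat.card K ^ 2 - 1 := by
    rw [orbit_single_zero, Nat.card_coe_set_eq, Set.ncard_compl, Set.ncard_singleton, Nat.card_fun,
      Nat.card_fin]
  rw [← Nat.card_congr (orbitProdStabilizerEquivGroup SL(2, K) e), Nat.card_prod, horb, hstab]

end Field

section FiniteField

variable {K : Type*} [Field K]

lemma card_fixedBy_of_ne_one [Finite K] {g : SL(2, K)} (hg : g ≠ 1) :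
    Nat.card (fixedBy (Fin 2 → K) g) = 1 ∨ Nat.card (fixedBy (Fin 2 → K) g) = Nat.card K := by
  refine card_fixedSubmodule_of_ne_id (f := (toLin' g : (Fin 2 → K) →ₗ[K] Fin 2 → K)) (by simp) ?_
  intro h
  exact hg <| toLin'_injective <| LinearEquiv.toLinearMap_injective <| h.trans (by simp)

variable (K)

lemma card_fixedBy_one : Nat.card (fixedBy (Fin 2 → K) (1 : SL(2, K))) = Nat.card K ^ 2 := by
  simp [Nat.card_fun]

lemma card_fixedBy_pow_mul_sub_one [Finite K] [DecidableEq SL(2, K)] (n : ℕ) (g : SL(2, K)) :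
    (Nat.card (fixedBy (Fin 2 → K) g) : ℤ) ^ n * (Nat.card (fixedBy (Fin 2 → K) g) - 1) =
      (Nat.card K : ℤ) ^ n * (Nat.card (fixedBy (Fin 2 → K) g) - 1) +
        if g = 1 then (Nat.card K : ℤ) ^ n * (Nat.card K ^ n - 1) * (Nat.card K ^ 2 - 1)
        else 0 := by
  split_ifs with hg
  · rw [hg, card_fixedBy_one]
    push_cast
    ring
  · rcases card_fixedBy_of_ne_one hg with h | h <;> rw [h] <;> push_cast <;> ring

lemma sum_card_fixedBy_sub_one [Fintype SL(2, K)] [Finite K] :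
    ∑ g : SL(2, K), ((Nat.card (fixedBy (Fin 2 → K) g) : ℤ) - 1) = Nat.card SL(2, K) := by
  have burnside : ∑ g : SL(2, K), (Nat.card (fixedBy (Fin 2 → K) g) : ℤ) =
      2 * Nat.card SL(2, K) := by
    have := sum_natCard_fixedBy_eq_card_orbits_mul_card_group SL(2, K) (Fin 2 → K)
    rw [card_orbits_SL_two] at this
    exact_mod_cast this
  rw [Finset.sum_sub_distrib, burnside, Finset.sum_const, Finset.card_univ,
    ← Nat.card_eq_fintype_card, nsmul_one]
  ring

lemma sum_card_fixedBy_pow_succ_sub_pow [Fintype SL(2, K)] [Finite K] (n : ℕ) :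
    ∑ g : SL(2, K), ((Nat.card (fixedBy (Fin 2 → K) g) : ℤ) ^ (n + 1) -
        (Nat.card (fixedBy (Fin 2 → K) g) : ℤ) ^ n) =
      (Nat.card K : ℤ) ^ n * Nat.card SL(2, K) +
        (Nat.card K : ℤ) ^ n * (Nat.card K ^ n - 1) * (Nat.card K ^ 2 - 1) := by
  classical
  simp only [pow_succ _ n, ← mul_sub_one, card_fixedBy_pow_mul_sub_one, Finset.sum_add_distrib,
    ← Finset.mul_sum, sum_card_fixedBy_sub_one, Finset.sum_ite_eq', Finset.mem_univ, if_true]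

theorem card_mul_card_orbits_succ_sub [Finite K] (n : ℕ) :
    (Nat.card K : ℤ) * (Nat.card (orbitRel.Quotient SL(2, K) (Fin (n + 1) → Fin 2 → K)) -
        Nat.card (orbitRel.Quotient SL(2, K) (Fin n → Fin 2 → K))) =
      (Nat.card K : ℤ) ^ n * (Nat.card K ^ n + Nat.card K - 1) := by
  have := Fintype.ofFinite SL(2, K)
  have burnside (m : ℕ) : ∑ g : SL(2, K), (Nat.card (fixedBy (Fin 2 → K) g) : ℤ) ^ m =
      Nat.card (orbitRel.Quotient SL(2, K) (Fin m → Fin 2 → K)) * Nat.card SL(2, K) := by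
    have := sum_card_fixedBy_pow_eq_card_orbits_mul_card_group SL(2, K) (Fin 2 → K) (Fin m)
    rw [Nat.card_fin] at this
    exact_mod_cast this
  have hK : 1 < (Nat.card K : ℤ) := mod_cast Finite.one_lt_card
  have hSL : (Nat.card SL(2, K) : ℤ) = (Nat.card K ^ 2 - 1) * Nat.card K := by
    rw [card_SL_two, Nat.cast_mul, Nat.cast_pred (pow_pos Nat.card_pos 2), Nat.cast_pow]
  have hpos : 0 < (Nat.card K : ℤ) ^ 2 - 1 := sub_pos.mpr (one_lt_pow₀ hK two_ne_zero)
  have hsum := sum_card_fixedBy_pow_succ_sub_pow K n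
  rw [Finset.sum_sub_distrib, burnside, burnside, hSL] at hsum
  apply mul_right_cancel₀ hpos.ne'
  linear_combination hsum

end FiniteField

theorem numClasses_succ_sub (p n : ℕ) (hp : p.Prime) (hn : 1 ≤ n) :
    (numClasses (Fin (n + 1) → ZMod p) : ℤ) - numClasses (Fin n → ZMod p) =
      (p : ℤ) ^ (n - 1) * ((p : ℤ) ^ n + p - 1) := by
  have : Fact p.Prime := ⟨hp⟩
  have numClasses_eq (k : ℕ) : numClasses (Fin k → ZMod p) =
      Nat.card (orbitRel.Quotient SL(2, ZMod p) (Fin k → Fin 2 → ZMod p)) :=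
    Nat.card_congr (pairRel.quotEquivOrbits p (Fin k))
  have hp0 : (p : ℤ) ≠ 0 := mod_cast hp.ne_zero
  apply mul_left_cancel₀ hp0
  calc (p : ℤ) * (numClasses (Fin (n + 1) → ZMod p) - numClasses (Fin n → ZMod p))
    _ = (p : ℤ) ^ n * ((p : ℤ) ^ n + p - 1) := by
      simpa only [numClasses_eq, Nat.card_zmod] using card_mul_card_orbits_succ_sub (ZMod p) n
    _ = p * ((p : ℤ) ^ (n - 1) * ((p : ℤ) ^ n + p - 1)) := by
      rw [← mul_assoc, mul_pow_sub_one (Nat.ne_of_gt hn)]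
end

section
/- Let p be a prime number. Define F(n) = r(ℤ_p^{n+1}) - r(ℤ_p^n) for n ≥ 1. Then for every n ≥ 2 the recurrence F(n) = p·F(n-1) + p^{2n-2}(p - 1) holds. -/
/-- The equivalence classes of `G × G` counted by `numClasses G`. -/
abbrev PairClass (G : Type*) [AddCommGroup G] : Type _ :=
  Quot (pairRel G)

namespace PairClass

section AddCommGroup

variable {G H : Type*} [AddCommGroup G] [AddCommGroup H]

/-- The class of the pair `(x, y)`. -/
abbrev mk (x y : G) : PairClass G :=
  Quot.mk _ (x, y)

theorem mk_swap (x y : G) : mk x y = mk y (-x) :=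
  Quot.sound (Or.inl rfl)

theorem mk_add_zsmul_right (x y : G) (m : ℤ) : mk x (y + m • x) = mk x y :=
  Eq.symm (Quot.sound (Or.inr ⟨m, rfl⟩))

theorem mk_add_zsmul_left (x y : G) (m : ℤ) : mk (x + m • y) y = mk x y :=
  calc mk (x + m • y) y
      = mk y (-x + (-m) • y) := by rw [mk_swap, neg_add, neg_smul]
    _ = mk y (-x) := mk_add_zsmul_right y (-x) (-m)
    _ = mk x y := (mk_swap x y).symm

/-- The map on classes induced by a group homomorphism. -/
def map (f : G →+ H) : PairClass G → PairClass H :=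
  Quot.map (Prod.map f f) <| by
    rintro ⟨x, y⟩ _ (rfl | ⟨m, rfl⟩)
    · exact Or.inl (Prod.ext rfl (map_neg f x))
    · exact Or.inr ⟨m, Prod.ext rfl (by simp)⟩

theorem map_leftInverse {f : G →+ H} {f' : H →+ G} (h : Function.LeftInverse f' f) :
    Function.LeftInverse (map f') (map f) := by
  rintro ⟨x, y⟩
  exact congrArg₂ mk (h x) (h y)

theorem mem_and_mem_iff_of_mk_eq {σ : Type*} [SetLike σ G] [AddSubgroupClass σ G] (S : σ)
    {x y x' y' : G} (h : mk x y = mk x' y') : x ∈ S ∧ y ∈ S ↔ x' ∈ S ∧ y' ∈ S := by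
  refine Eq.to_iff (congrArg (Quot.lift (fun z : G × G ↦ z.1 ∈ S ∧ z.2 ∈ S) ?_) h)
  rintro ⟨x, y⟩ _ (rfl | ⟨m, rfl⟩)
  · simp only [neg_mem_iff, and_comm]
  · exact propext (and_congr_right fun hx ↦ (add_mem_cancel_right (zsmul_mem hx m)).symm)

theorem apply_eq_of_mk_eq {R : Type*} [CommRing R] [Module R G] [Module R H]
    {B : G →ₗ[R] G →ₗ[R] H} (hB : B.IsAlt) {x y x' y' : G} (h : mk x y = mk x' y') :
    B x y = B x' y' := by
  refine congrArg (Quot.lift (fun z : G × G ↦ B z.1 z.2) ?_) h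
  rintro ⟨x, y⟩ _ (rfl | ⟨m, rfl⟩)
  · simp only [map_neg, hB.neg]
  · simp only [map_add, map_zsmul, hB.self_eq_zero, smul_zero, add_zero]

theorem map_inr_ne_mk_of_fst_ne_zero (q : PairClass H) (x : G × H) {y : G × H} (hy : y.1 ≠ 0) :
    map (AddMonoidHom.inr G H) q ≠ mk x y := by
  obtain ⟨u, v⟩ := q
  intro h
  have hmem := mem_and_mem_iff_of_mk_eq (AddMonoidHom.fst G H).ker h
  exact hy (hmem.1 ⟨rfl, rfl⟩).2

end AddCommGroup

section ZModModule

variable {n : ℕ} {G : Type*} [AddCommGroup G] [Module (ZMod n) G]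

theorem mk_add_smul_right (x y : G) (c : ZMod n) : mk x (y + c • x) = mk x y := by
  obtain ⟨m, rfl⟩ := ZMod.intCast_surjective c
  rw [Int.cast_smul_eq_zsmul, mk_add_zsmul_right]

theorem mk_add_smul_left (x y : G) (c : ZMod n) : mk (x + c • y) y = mk x y := by
  obtain ⟨m, rfl⟩ := ZMod.intCast_surjective c
  rw [Int.cast_smul_eq_zsmul, mk_add_zsmul_left]

end ZModModule

section Prod

/-- The alternating form `((a, g), (b, k)) ↦ b • g - a • k` on `R × M`. On the normal forms
`((0, g), (1, k))` its value is `g`. -/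
def minorForm (R M : Type*) [CommRing R] [AddCommGroup M] [Module R M] :
    R × M →ₗ[R] R × M →ₗ[R] M :=
  LinearMap.mk₂ R (fun x y ↦ y.1 • x.2 - x.1 • y.2)
    (fun x x' y ↦ by simp only [Prod.fst_add, Prod.snd_add]; module)
    (fun c x y ↦ by simp only [Prod.smul_fst, Prod.smul_snd, smul_eq_mul]; module)
    (fun x y y' ↦ by simp only [Prod.fst_add, Prod.snd_add]; module)
    (fun c x y ↦ by simp only [Prod.smul_fst, Prod.smul_snd, smul_eq_mul]; module)

theorem minorForm_isAlt (R M : Type*) [CommRing R] [AddCommGroup M] [Module R M] :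
    (minorForm R M).IsAlt :=
  fun x ↦ sub_self (x.1 • x.2)

variable {n : ℕ} {M : Type*} [AddCommGroup M] [Module (ZMod n) M]

theorem mk_zero_one_eq_mk_zero_one_iff {g k g' k' : M} :
    mk ((0 : ZMod n), g) (1, k) = mk (0, g') (1, k') ↔
      g = g' ∧ k - k' ∈ Submodule.span (ZMod n) {g} := by
  constructor
  · intro h
    obtain rfl : g = g' := by
      simpa [minorForm] using apply_eq_of_mk_eq (minorForm_isAlt (ZMod n) M) h
    have hk : ((1 : ZMod n), k) ∈ Submodule.span (ZMod n) {(0, g), (1, k')} :=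
      ((mem_and_mem_iff_of_mk_eq _ h).2 (Set.pair_subset_iff.1 Submodule.subset_span)).2
    obtain ⟨c, d, hcd⟩ := Submodule.mem_span_pair.1 hk
    obtain ⟨rfl, rfl⟩ : d = 1 ∧ c • g + d • k' = k := by simpa using hcd
    exact ⟨rfl, Submodule.mem_span_singleton.2 ⟨c, by module⟩⟩
  · rintro ⟨rfl, hk⟩
    obtain ⟨c, hc⟩ := Submodule.mem_span_singleton.1 hk
    have hshear : ((1 : ZMod n), k) = (1, k') + c • (0, g) := by simp [hc]
    rw [hshear, mk_add_smul_right]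

theorem exists_mk_eq_mk_zero_one_of_fst_eq_one (x : ZMod n × M) {y : ZMod n × M} (hy : y.1 = 1) :
    ∃ g k, mk x y = mk (0, g) (1, k) := by
  refine ⟨x.2 - x.1 • y.2, y.2, ?_⟩
  rw [← mk_add_smul_left x y (-x.1)]
  exact congrArg₂ mk (Prod.ext (by simp [hy]) (by simp [sub_eq_add_neg])) (Prod.ext hy rfl)

end Prod

section Prime

variable {p : ℕ} [Fact p.Prime] {V : Type*} [AddCommGroup V] [Module (ZMod p) V]

theorem exists_mk_eq_mk_zero_one_of_fst_ne_zero {x : ZMod p × V} (hx : x.1 ≠ 0)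
    (y : ZMod p × V) : ∃ g k, mk x y = mk (0, g) (1, k) := by
  rw [← mk_add_smul_right x y ((1 - y.1) / x.1)]
  apply exists_mk_eq_mk_zero_one_of_fst_eq_one
  simp [hx]

theorem exists_mk_eq_mk_zero_one {x y : ZMod p × V} (h : x.1 ≠ 0 ∨ y.1 ≠ 0) :
    ∃ g k, mk x y = mk (0, g) (1, k) := by
  rcases h with hx | hy
  · exact exists_mk_eq_mk_zero_one_of_fst_ne_zero hx y
  · rw [mk_swap]
    exact exists_mk_eq_mk_zero_one_of_fst_ne_zero hy (-x)

variable (p V)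

/-- The class of `((0, g), (1, k))`, as a function of `g` and of `k` modulo the multiples of `g`. -/
def ofZeroOne (s : Σ g : V, V ⧸ Submodule.span (ZMod p) {g}) : PairClass (ZMod p × V) :=
  Quotient.liftOn' s.2 (fun k ↦ mk (0, s.1) (1, k)) fun _ _ h ↦
    mk_zero_one_eq_mk_zero_one_iff.2 ⟨rfl, (Submodule.quotientRel_def _).1 h⟩

theorem ofZeroOne_injective : Function.Injective (ofZeroOne p V) := by
  rintro ⟨g, ⟨k⟩⟩ ⟨g', ⟨k'⟩⟩ h
  obtain ⟨rfl, hk⟩ := mk_zero_one_eq_mk_zero_one_iff.1 h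
  exact congrArg (Sigma.mk g) ((Submodule.Quotient.eq _).2 hk)

theorem bijective_sumElim_map_inr_ofZeroOne :
    Function.Bijective (Sum.elim (map (AddMonoidHom.inr (ZMod p) V)) (ofZeroOne p V)) := by
  constructor
  · refine Function.Injective.sumElim ?_ (ofZeroOne_injective p V) ?_
    · exact (map_leftInverse (f' := AddMonoidHom.snd (ZMod p) V) fun _ ↦ rfl).injective
    · rintro q ⟨g, ⟨k⟩⟩
      exact map_inr_ne_mk_of_fst_ne_zero q (0, g) (one_ne_zero (α := ZMod p))
  · rintro ⟨x, y⟩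
    by_cases h : x.1 ≠ 0 ∨ y.1 ≠ 0
    · obtain ⟨g, k, hgk⟩ := exists_mk_eq_mk_zero_one h
      exact ⟨Sum.inr ⟨g, Submodule.Quotient.mk k⟩, hgk.symm⟩
    · obtain ⟨hx, hy⟩ : x.1 = 0 ∧ y.1 = 0 := by simpa using h
      exact ⟨Sum.inl (mk x.2 y.2), congrArg₂ mk (Prod.ext hx.symm rfl) (Prod.ext hy.symm rfl)⟩

end Prime

end PairClass

theorem numClasses_congr {G H : Type*} [AddCommGroup G] [AddCommGroup H] (e : G ≃+ H) :
    numClasses G = numClasses H :=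
  Nat.card_congr
    { toFun := PairClass.map e.toAddMonoidHom
      invFun := PairClass.map e.symm.toAddMonoidHom
      left_inv := PairClass.map_leftInverse e.left_inv
      right_inv := PairClass.map_leftInverse e.right_inv }

theorem numClasses_zmod_prod (p : ℕ) [Fact p.Prime] (V : Type*) [AddCommGroup V]
    [Module (ZMod p) V] [Fintype V] :
    numClasses (ZMod p × V) =
      numClasses V + ∑ g : V, Nat.card (V ⧸ Submodule.span (ZMod p) {g}) := by
  rw [numClasses,
    ← Nat.card_eq_of_bijective _ (PairClass.bijective_sumElim_map_inr_ofZeroOne p V),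
    Nat.card_sum, Nat.card_sigma, numClasses]

section Counting

variable {K V : Type*} [DivisionRing K] [AddCommGroup V] [Module K V]

theorem natCard_quotient_span_singleton [Module.Finite K V] {n : ℕ}
    (hn : Module.finrank K V = n + 1) {v : V} (hv : v ≠ 0) :
    Nat.card (V ⧸ Submodule.span K {v}) = Nat.card K ^ n := by
  have hrank := Submodule.finrank_quotient_add_finrank (Submodule.span K {v})
  rw [finrank_span_singleton hv, hn] at hrank
  rw [Module.natCard_eq_pow_finrank (K := K), Nat.succ_injective hrank]

theorem sum_natCard_quotient_span_singleton [Fintype V] {n : ℕ}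
    (hn : Module.finrank K V = n + 1) :
    ∑ v : V, Nat.card (V ⧸ Submodule.span K {v}) =
      Nat.card K ^ (n + 1) + (Nat.card K ^ (n + 1) - 1) * Nat.card K ^ n := by
  classical
  have hcard : Nat.card V = Nat.card K ^ (n + 1) := hn ▸ Module.natCard_eq_pow_finrank
  have hzero : Nat.card (V ⧸ Submodule.span K {(0 : V)}) = Nat.card K ^ (n + 1) := by
    rw [Submodule.span_zero_singleton, ← hcard]
    exact Nat.card_congr (Submodule.quotEquivOfEqBot ⊥ rfl).toEquiv
  have hne : ∀ v ∈ ({0}ᶜ : Finset V), Nat.card (V ⧸ Submodule.span K {v}) = Nat.card K ^ n :=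
    fun v hv ↦ natCard_quotient_span_singleton hn (by simpa using hv)
  rw [Fintype.sum_eq_add_sum_compl 0, hzero, Finset.sum_congr rfl hne, Finset.sum_const,
    smul_eq_mul, Finset.card_compl, Finset.card_singleton, ← Nat.card_eq_fintype_card, hcard]

end Counting

theorem numClasses_fin_succ_succ (p : ℕ) [Fact p.Prime] (n : ℕ) :
    numClasses (Fin (n + 2) → ZMod p) =
      numClasses (Fin (n + 1) → ZMod p) + (p ^ (n + 1) + (p ^ (n + 1) - 1) * p ^ n) := by
  have hrank : Module.finrank (ZMod p) (Fin (n + 1) → ZMod p) = n + 1 := Module.finrank_fin_fun _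
  rw [← numClasses_congr (Fin.consLinearEquiv (ZMod p) fun _ ↦ ZMod p).toAddEquiv,
    numClasses_zmod_prod, sum_natCard_quotient_span_singleton hrank, Nat.card_zmod]

theorem numClasses_diff_recurrence (p : ℕ) (hp : p.Prime)
    (F : ℕ → ℤ)
    (hF : ∀ n, 1 ≤ n → F n = (numClasses (Fin (n + 1) → ZMod p) : ℤ) -
      numClasses (Fin n → ZMod p)) :
    ∀ n, 2 ≤ n → F n = p * F (n - 1) + (p : ℤ) ^ (2 * n - 2) * ((p : ℤ) - 1) := by
  have : Fact p.Prime := ⟨hp⟩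
  have hF_succ (m : ℕ) : F (m + 1) = p ^ (m + 1) + (p ^ (m + 1) - 1) * p ^ m := by
    rw [hF (m + 1) m.succ_pos, numClasses_fin_succ_succ]
    push_cast [Nat.one_le_pow _ _ hp.pos]
    ring
  intro n hn
  obtain ⟨m, rfl⟩ := Nat.exists_eq_add_of_le' hn
  have hexp : 2 * (m + 2) - 2 = 2 * (m + 1) := by lia
  rw [hexp, show m + 2 - 1 = m + 1 from rfl, hF_succ, hF_succ]
  ring
end

section
/- For every prime number p, r(ℤ_p) = 2; that is, the quotient of ℤ_p × ℤ_p by the equivalence relation generated by (g,k) ~ (k,-g) and (g,k) ~ (g, k + m·g) has exactly two classes, namely the class of (0,0) and the class of all nonzero pairs. -/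
/-!
Both moves fix the zero pair and are injective, so the zero pair is alone in its class. If `g` and
`h` both generate `G`, then `(g, k) ~ (g, h) ~ (h, -g) ~ (h, l)` for all `k` and `l`. When `G` has
no proper nontrivial subgroup, every nonzero element is a generator, and a nonzero pair can be
rotated so that its first entry is nonzero; hence all nonzero pairs are equivalent.
-/

namespace pairRel

variable {G : Type*} [AddCommGroup G]

lemma mk_rotate (g k : G) : Quot.mk (pairRel G) (g, k) = Quot.mk (pairRel G) (k, -g) :=
  Quot.sound (Or.inl rfl)

lemma mk_eq_mk_of_sub_mem_zmultiples {g k l : G} (h : l - k ∈ AddSubgroup.zmultiples g) :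
    Quot.mk (pairRel G) (g, k) = Quot.mk (pairRel G) (g, l) := by
  obtain ⟨m, hm⟩ := AddSubgroup.mem_zmultiples_iff.mp h
  exact Quot.sound (Or.inr ⟨m, by rw [hm, add_sub_cancel]⟩)

lemma mk_eq_mk_of_zmultiples_eq_top {g h : G} (hg : AddSubgroup.zmultiples g = ⊤)
    (hh : AddSubgroup.zmultiples h = ⊤) (k l : G) :
    Quot.mk (pairRel G) (g, k) = Quot.mk (pairRel G) (h, l) :=
  calc
    Quot.mk (pairRel G) (g, k) = Quot.mk (pairRel G) (g, h) :=
      mk_eq_mk_of_sub_mem_zmultiples (hg ▸ AddSubgroup.mem_top _)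
    _ = Quot.mk (pairRel G) (h, -g) := mk_rotate g h
    _ = Quot.mk (pairRel G) (h, l) :=
      mk_eq_mk_of_sub_mem_zmultiples (hh ▸ AddSubgroup.mem_top _)

lemma eq_zero_iff {x y : G × G} (h : pairRel G x y) : x = 0 ↔ y = 0 := by
  rcases h with rfl | ⟨m, rfl⟩
  · simp [Prod.ext_iff, and_comm]
  · simp +contextual [Prod.ext_iff]

lemma mk_eq_mk_zero_iff {x : G × G} : Quot.mk (pairRel G) x = Quot.mk (pairRel G) 0 ↔ x = 0 := by
  refine ⟨fun h => ?_, fun h => h ▸ rfl⟩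
  have hlift := congrArg (Quot.lift (· = 0) fun _ _ hxy => propext (eq_zero_iff hxy)) h
  exact hlift.mpr rfl

lemma exists_mk_eq_mk_fst_ne_zero {x : G × G} (hx : x ≠ 0) :
    ∃ y : G × G, y.1 ≠ 0 ∧ Quot.mk (pairRel G) x = Quot.mk (pairRel G) y := by
  obtain ⟨g, k⟩ := x
  by_cases hg : g = 0
  · exact ⟨(k, -g), fun hk => hx (Prod.ext hg hk), mk_rotate g k⟩
  · exact ⟨(g, k), hg, rfl⟩

lemma mk_eq_mk_of_ne_zero [IsSimpleAddGroup G] {x y : G × G} (hx : x ≠ 0) (hy : y ≠ 0) :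
    Quot.mk (pairRel G) x = Quot.mk (pairRel G) y := by
  have zmultiples_eq_top {g : G} (hg : g ≠ 0) : AddSubgroup.zmultiples g = ⊤ :=
    (eq_bot_or_eq_top _).resolve_left (mt AddSubgroup.zmultiples_eq_bot.mp hg)
  obtain ⟨⟨g, k⟩, hg, hxg⟩ := exists_mk_eq_mk_fst_ne_zero hx
  obtain ⟨⟨h, l⟩, hh, hyh⟩ := exists_mk_eq_mk_fst_ne_zero hy
  rw [hxg, hyh]
  exact mk_eq_mk_of_zmultiples_eq_top (zmultiples_eq_top hg) (zmultiples_eq_top hh) k l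

end pairRel

lemma numClasses_eq_two (G : Type*) [AddCommGroup G] [IsSimpleAddGroup G] :
    numClasses G = 2 := by
  refine (Nat.card_eq_two_iff' (Quot.mk (pairRel G) 0)).mpr ?_
  obtain ⟨x, hx⟩ := exists_ne (0 : G × G)
  refine ⟨Quot.mk _ x, mt pairRel.mk_eq_mk_zero_iff.mp hx, ?_⟩
  rintro ⟨y⟩ hy
  exact pairRel.mk_eq_mk_of_ne_zero (mt pairRel.mk_eq_mk_zero_iff.mpr hy) hx

theorem numClasses_zmod_prime_general (G : Type*) [AddCommGroup G] [IsSimpleAddGroup G] :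
    numClasses G = 2 ∧
    (∀ x y : G × G, x ≠ (0, 0) → y ≠ (0, 0) →
      Quot.mk (pairRel G) x = Quot.mk (pairRel G) y) ∧
    (∀ x : G × G, x ≠ (0, 0) →
      Quot.mk (pairRel G) x ≠ Quot.mk (pairRel G) (0, 0)) :=
  ⟨numClasses_eq_two G, fun _ _ => pairRel.mk_eq_mk_of_ne_zero,
    fun _ => mt pairRel.mk_eq_mk_zero_iff.mp⟩

theorem numClasses_zmod_prime (p : ℕ) (hp : p.Prime) :
    numClasses (ZMod p) = 2 ∧
    (∀ x y : ZMod p × ZMod p, x ≠ (0, 0) → y ≠ (0, 0) →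
      Quot.mk (pairRel (ZMod p)) x = Quot.mk (pairRel (ZMod p)) y) ∧
    (∀ x : ZMod p × ZMod p, x ≠ (0, 0) →
      Quot.mk (pairRel (ZMod p)) x ≠ Quot.mk (pairRel (ZMod p)) (0, 0)) := by
  have : Fact p.Prime := ⟨hp⟩
  exact numClasses_zmod_prime_general (ZMod p)
end

section
/- For every natural number n ≥ 2, the number of words a_1 a_2 ⋯ a_n of length n with letters a_i ∈ {1,2,3,4} satisfying a_1 = 1 and, for every i, 0 < a_i ≤ max_{j ≤ i-1} a_j + 1 (numbering from left to right), equals (2^{n-1} + 1)(2^{n-2} + 1) / 3. -/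
/-!
What may follow a prefix depends only on its largest letter `m`. While `m` is smaller than the
alphabet size `k`, the next letter is either one of the `m` letters up to `m`, which keeps the
maximum, or `m + 1`, which raises it by one. So the number `c m n` of continuations of length `n`
satisfies `c m (n + 1) = m * c m n + c (m + 1) n`. Once `m + 1 ≥ k` the density condition is void
and `c m n = k ^ n`; solving the recurrence downwards through `m = k - 2` and `m = k - 3` yields
`c 1` for `k = 4`. A dense word is a letter `1` followed by a continuation from `m = 1`.
-/

/-- A word `a_1 ⋯ a_n` over the alphabet `{1,2,3,4}` satisfying the density
condition: every letter is positive and exceeds the maximum of all previous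
letters by at most 1. -/
def IsDenseWord (n : ℕ) (a : Fin n → ℕ) : Prop :=
  (∀ i, a i ∈ Finset.Icc 1 4) ∧
  ∀ i : Fin n, 0 < a i ∧ a i ≤ (Finset.univ.filter fun j => j < i).sup a + 1

open Finset

theorem sup_Iio_succ_cons {α : Type*} [SemilatticeSup α] [OrderBot α] {n : ℕ} (x : α)
    (b : Fin n → α) (i : Fin n) :
    (Iio i.succ).sup (Fin.cons x b : Fin (n + 1) → α) = x ⊔ (Iio i).sup b := by
  have Iio_succ : Iio i.succ = insert 0 ((Iio i).map (Fin.succEmb n)) := by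
    ext j
    cases j using Fin.cases <;> simp
  rw [Iio_succ, sup_insert, sup_map, Fin.cons_zero]
  rfl

/-- The words of length `n` over `{1, …, k}` that satisfy the density condition when they are
appended to a prefix with largest letter `m`, where `m = 0` stands for the empty prefix. -/
def denseWordsFrom (k m n : ℕ) : Finset (Fin n → ℕ) :=
  {a ∈ Fintype.piFinset fun _ ↦ Icc 1 k | ∀ i, a i ≤ max m ((Iio i).sup a) + 1}

theorem mem_denseWordsFrom {k m n : ℕ} {a : Fin n → ℕ} :
    a ∈ denseWordsFrom k m n ↔
      (∀ i, a i ∈ Icc 1 k) ∧ ∀ i, a i ≤ max m ((Iio i).sup a) + 1 := by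
  rw [denseWordsFrom, mem_filter, Fintype.mem_piFinset]

theorem cons_mem_denseWordsFrom {k m n x : ℕ} {b : Fin n → ℕ} :
    (Fin.cons x b : Fin (n + 1) → ℕ) ∈ denseWordsFrom k m (n + 1) ↔
      x ∈ Icc 1 (min k (m + 1)) ∧ b ∈ denseWordsFrom k (max m x) n := by
  have sup_Iio_zero : (Iio (0 : Fin (n + 1))).sup (Fin.cons x b : Fin (n + 1) → ℕ) = 0 := by
    simp
  simp only [mem_denseWordsFrom, Fin.forall_fin_succ, Fin.cons_zero, Fin.cons_succ,
    sup_Iio_zero, sup_Iio_succ_cons, max_assoc, Nat.max_zero, mem_Icc, le_min_iff]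
  tauto

theorem card_denseWordsFrom_succ (k m n : ℕ) :
    #(denseWordsFrom k m (n + 1)) =
      ∑ x ∈ Icc 1 (min k (m + 1)), #(denseWordsFrom k (max m x) n) := by
  rw [← card_sigma]
  refine card_nbij' (fun a ↦ ⟨a 0, Fin.tail a⟩) (fun p ↦ Fin.cons p.1 p.2) ?_ ?_ ?_ ?_
  · intro a ha
    rw [mem_coe, ← Fin.cons_self_tail a, cons_mem_denseWordsFrom] at ha
    exact mem_sigma.2 ha
  · intro p hp
    exact cons_mem_denseWordsFrom.2 (mem_sigma.1 hp)
  · exact fun a _ ↦ Fin.cons_self_tail a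
  · exact fun _ _ ↦ rfl

theorem card_denseWordsFrom_succ_of_lt {k m : ℕ} (hmk : m < k) (n : ℕ) :
    #(denseWordsFrom k m (n + 1)) =
      m * #(denseWordsFrom k m n) + #(denseWordsFrom k (m + 1) n) := by
  have old_letters : ∑ x ∈ Icc 1 m, #(denseWordsFrom k (max m x) n) =
      m * #(denseWordsFrom k m n) := by
    rw [sum_congr rfl fun x hx ↦ by rw [max_eq_left (mem_Icc.1 hx).2]]
    simp
  rw [card_denseWordsFrom_succ, min_eq_right hmk, sum_Icc_succ_top (by lia), old_letters,
    max_eq_right m.le_succ]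

theorem card_denseWordsFrom_of_le {k m : ℕ} (hkm : k ≤ m + 1) (n : ℕ) :
    #(denseWordsFrom k m n) = k ^ n := by
  have density_void : denseWordsFrom k m n = Fintype.piFinset fun _ ↦ Icc 1 k := by
    refine filter_true_of_mem fun a ha i ↦ ?_
    have letter_le : a i ≤ k := (mem_Icc.1 (Fintype.mem_piFinset.1 ha i)).2
    lia
  simp [density_void]

theorem two_mul_card_denseWordsFrom (m n : ℕ) :
    2 * #(denseWordsFrom (m + 2) m n) = (m + 2) ^ n + m ^ n := by
  induction n with
  | zero => simp [denseWordsFrom]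
  | succ n ih =>
    rw [card_denseWordsFrom_succ_of_lt (by lia), card_denseWordsFrom_of_le le_rfl]
    linear_combination m * ih

theorem six_mul_card_denseWordsFrom (m n : ℕ) :
    6 * #(denseWordsFrom (m + 3) m n) = (m + 3) ^ n + 3 * (m + 1) ^ n + 2 * m ^ n := by
  induction n with
  | zero => simp [denseWordsFrom]
  | succ n ih =>
    rw [card_denseWordsFrom_succ_of_lt (by lia)]
    linear_combination m * ih + 3 * two_mul_card_denseWordsFrom (m + 1) n

theorem mem_denseWordsFrom_four_zero {n : ℕ} {a : Fin n → ℕ} :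
    a ∈ denseWordsFrom 4 0 n ↔ IsDenseWord n a := by
  simp only [mem_denseWordsFrom, IsDenseWord, filter_gt_eq_Iio, Nat.zero_max]
  exact and_congr_right fun ha ↦ forall_congr' fun i ↦
    (and_iff_right (mem_Icc.1 (ha i)).1).symm

theorem IsDenseWord.apply_zero {n : ℕ} {a : Fin (n + 1) → ℕ} (ha : IsDenseWord (n + 1) a) :
    a 0 = 1 := by
  obtain ⟨pos, le⟩ := ha.2 0
  simp only [Fin.not_lt_zero, filter_false, sup_empty, bot_eq_zero] at le
  lia

theorem three_mul_card_denseWordsFrom_four_zero (n : ℕ) :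
    3 * #(denseWordsFrom 4 0 (n + 2)) = (2 ^ (n + 1) + 1) * (2 ^ n + 1) := by
  have remove_first : #(denseWordsFrom 4 0 (n + 2)) = #(denseWordsFrom 4 1 (n + 1)) := by
    rw [card_denseWordsFrom_succ_of_lt four_pos, zero_mul, zero_add]
  have closed_form : 6 * #(denseWordsFrom 4 1 (n + 1)) = 4 ^ (n + 1) + 3 * 2 ^ (n + 1) + 2 := by
    simpa using six_mul_card_denseWordsFrom 1 (n + 1)
  have four_pow : 4 ^ n = 2 ^ n * 2 ^ n := mul_pow 2 2 n
  rw [pow_succ, pow_succ, four_pow] at closed_form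
  rw [remove_first, pow_succ]
  linarith

theorem card_denseWords (n : ℕ) (hn : 2 ≤ n) :
    Nat.card {a : Fin n → ℕ // IsDenseWord n a ∧ a ⟨0, by omega⟩ = 1} =
      (2 ^ (n - 1) + 1) * (2 ^ (n - 2) + 1) / 3 := by
  obtain ⟨k, rfl⟩ := Nat.exists_eq_add_of_le' hn
  have card_eq : Nat.card {a : Fin (k + 2) → ℕ // IsDenseWord (k + 2) a ∧ a ⟨0, by omega⟩ = 1} =
      #(denseWordsFrom 4 0 (k + 2)) :=
    Nat.subtype_card _ fun a ↦ mem_denseWordsFrom_four_zero.trans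
      (and_iff_left_of_imp IsDenseWord.apply_zero).symm
  rw [card_eq]
  exact Nat.eq_div_of_mul_eq_right three_ne_zero (three_mul_card_denseWordsFrom_four_zero k)
end

section
/- For every natural number n ≥ 1, the number of words a_1 a_2 ⋯ a_{n+1} of length n+1 with letters a_i ∈ {1,2,3,4} satisfying a_1 = 1 and, for every i, 0 < a_i ≤ max_{j ≤ i-1} a_j + 1, equals r(ℤ_2^n), the number of equivalence classes of ℤ_2^n × ℤ_2^n under the equivalence relation generated by (g,k) ~ (k,-g) and (g,k) ~ (g, k + m·g). -/
/-- A word in the positive integers that is a restricted growth function: each letter exceeds the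
maximum of the earlier ones (`0` if there are none) by at most one. It is a dense word without the
bound on its letters. -/
def IsRestrictedGrowth {ι : Type*} [Preorder ι] [LocallyFiniteOrderBot ι] (a : ι → ℕ) : Prop :=
  ∀ i, 0 < a i ∧ a i ≤ (Finset.Iio i).sup a + 1

lemma isDenseWord_iff {n : ℕ} {a : Fin n → ℕ} :
    IsDenseWord n a ↔ (∀ i, a i ∈ Finset.Icc 1 4) ∧ IsRestrictedGrowth a := by
  simp only [IsDenseWord, IsRestrictedGrowth, Finset.filter_gt_eq_Iio]

lemma wellFoundedLT_of_locallyFiniteOrderBot (ι : Type*) [Preorder ι] [LocallyFiniteOrderBot ι] :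
    WellFoundedLT ι :=
  StrictMono.wellFoundedLT (f := fun i : ι => Finset.Iio i) fun _ _ => Finset.Iio_ssubset_Iio

namespace IsRestrictedGrowth

section Preorder

variable {ι : Type*} [Preorder ι] [LocallyFiniteOrderBot ι] {a b : ι → ℕ}

lemma exists_lt_eq_of_le_sup (ha : IsRestrictedGrowth a) {i : ι} {v : ℕ} (hv : 0 < v)
    (hvi : v ≤ (Finset.Iio i).sup a) : ∃ j < i, a j = v := by
  have := wellFoundedLT_of_locallyFiniteOrderBot ι
  induction i using WellFoundedLT.induction with
  | ind i ih =>
    obtain ⟨j, hj, hvj⟩ := (Finset.le_sup_iff hv).1 hvi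
    rw [Finset.mem_Iio] at hj
    obtain hvj | hvj := hvj.eq_or_lt
    · exact ⟨j, hj, hvj.symm⟩
    · obtain ⟨l, hlj, hl⟩ := ih j hj (Nat.lt_succ_iff.1 (hvj.trans_le (ha j).2))
      exact ⟨l, hlj.trans hj, hl⟩

lemma eq_sup_add_one (ha : IsRestrictedGrowth a) {i : ι} (hnew : ∀ j < i, a j ≠ a i) :
    a i = (Finset.Iio i).sup a + 1 := by
  refine (ha i).2.antisymm ?_
  by_contra! hlt
  obtain ⟨j, hji, hj⟩ := ha.exists_lt_eq_of_le_sup (ha i).1 (Nat.lt_succ_iff.1 hlt)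
  exact hnew j hji hj

theorem eq_of_ker_eq (ha : IsRestrictedGrowth a) (hb : IsRestrictedGrowth b)
    (h : Setoid.ker a = Setoid.ker b) : a = b := by
  have hab (i j : ι) : a i = a j ↔ b i = b j := by
    rw [← Setoid.ker_def, h, Setoid.ker_def]
  have := wellFoundedLT_of_locallyFiniteOrderBot ι
  funext i
  induction i using WellFoundedLT.induction with
  | ind i ih =>
    by_cases hold : ∃ j < i, a j = a i
    · obtain ⟨j, hji, hj⟩ := hold
      rw [← hj, ih j hji, (hab j i).1 hj]
    · push Not at hold
      have hold' : ∀ j < i, b j ≠ b i := fun j hji hj => hold j hji ((hab j i).2 hj)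
      rw [ha.eq_sup_add_one hold, hb.eq_sup_add_one hold',
        Finset.sup_congr rfl fun j hj => ih j (Finset.mem_Iio.1 hj)]

end Preorder

theorem exists_mem_of_swap_comp_mem {ι : Type*} [LinearOrder ι] [OrderBot ι]
    [LocallyFiniteOrderBot ι] [Finite ι] {S : Set (ι → ℕ)} (hS : S.Nonempty)
    (hpos : ∀ a ∈ S, ∀ i, 0 < a i) (hbot : ∀ a ∈ S, a ⊥ = 1)
    (hswap : ∀ a ∈ S, ∀ s > 1, s + 1 ∈ Set.range a → Equiv.swap s (s + 1) ∘ a ∈ S) :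
    ∃ a ∈ S, IsRestrictedGrowth a := by
  obtain ⟨a, haS, hmin⟩ :=
    (InvImage.wf (toLex : (ι → ℕ) → Lex (ι → ℕ)) wellFounded_lt).has_min S hS
  refine ⟨a, haS, fun i => ⟨hpos a haS i, ?_⟩⟩
  by_contra! hlt
  obtain ⟨s, hs⟩ : ∃ s, a i = s + 1 := Nat.exists_eq_add_one.2 (hpos a haS i)
  have hearlier : ∀ j < i, a j < s := fun j hji =>
    (Finset.le_sup (f := a) (Finset.mem_Iio.2 hji)).trans_lt (by omega)
  have hi : ⊥ < i := by
    refine bot_lt_iff_ne_bot.2 fun hi => ?_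
    rw [hi, hbot a haS] at hlt
    omega
  have hs1 : 1 < s := hbot a haS ▸ hearlier ⊥ hi
  refine hmin _ (hswap a haS s hs1 ⟨i, hs⟩) ⟨i, fun j hji => ?_, ?_⟩
  · have hjs := hearlier j hji
    exact Equiv.swap_apply_of_ne_of_ne hjs.ne (hjs.trans s.lt_succ_self).ne
  · change Equiv.swap s (s + 1) (a i) < a i
    rw [hs, Equiv.swap_apply_right]
    exact s.lt_succ_self

end IsRestrictedGrowth

/-- The columns of the two-row array with rows `p.1` and `p.2`, preceded by a zero column, which
records the letter `1` at the start of a dense word. -/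
def columns {n : ℕ} {A : Type*} [Zero A] (p : (Fin n → A) × (Fin n → A)) : Fin (n + 1) → A × A :=
  Fin.cons (0, 0) fun i => (p.1 i, p.2 i)

section Columns

variable {n : ℕ} {A : Type*}

lemma columns_injective [Zero A] :
    Function.Injective (columns : (Fin n → A) × (Fin n → A) → Fin (n + 1) → A × A) :=
  (Fin.cons_right_injective _).comp (Equiv.arrowProdEquivProdArrow (Fin n) _ _).symm.injective

variable [AddCommGroup A]

lemma columns_rotate (g k : Fin n → A) :
    columns (k, -g) = (fun c => (c.2, -c.1)) ∘ columns (g, k) := by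
  funext i
  cases i using Fin.cases <;> simp [columns]

lemma columns_shear (g k : Fin n → A) (m : ℤ) :
    columns (g, k + m • g) = (fun c => (c.1, c.2 + m • c.1)) ∘ columns (g, k) := by
  funext i
  cases i using Fin.cases <;> simp [columns]

lemma exists_injective_columns_eq_comp {p q : (Fin n → A) × (Fin n → A)}
    (h : pairRel (Fin n → A) p q) :
    ∃ f : A × A → A × A, Function.Injective f ∧ columns q = f ∘ columns p := by
  obtain ⟨g, k⟩ := p
  obtain rfl | ⟨m, rfl⟩ := h
  · refine ⟨_, ?_, columns_rotate g k⟩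
    rintro ⟨x, y⟩ ⟨x', y'⟩ hcd
    simpa [and_comm] using hcd
  · refine ⟨_, ?_, columns_shear g k m⟩
    rintro ⟨x, y⟩ ⟨x', y'⟩ hcd
    simp only [Prod.mk.injEq] at hcd
    obtain ⟨rfl, hy⟩ := hcd
    rw [add_right_cancel hy]

theorem ker_columns_eq_of_mk_eq {p q : (Fin n → A) × (Fin n → A)}
    (h : Quot.mk (pairRel (Fin n → A)) p = Quot.mk _ q) :
    Setoid.ker (columns p) = Setoid.ker (columns q) := by
  refine congrArg (Quot.lift (fun p => Setoid.ker (columns p)) fun p q hpq => ?_) h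
  obtain ⟨f, hf, hq⟩ := exists_injective_columns_eq_comp hpq
  ext i j
  simp only [Setoid.ker_def, hq, Function.comp_apply, hf.eq_iff]

end Columns

/-- The letter in `{1, 2, 3, 4}` that names a column: a column is read as a two-digit binary number,
so that the rotation and the shear exchange consecutive letters. -/
def letter (c : ZMod 2 × ZMod 2) : ℕ := 2 * c.1.val + c.2.val + 1

lemma letter_injective : Function.Injective letter := by decide

lemma range_letter : Set.range letter = Set.Icc 1 4 := by
  ext a
  constructor
  · rintro ⟨c, rfl⟩
    revert c
    decide
  · rintro ⟨h1, h4⟩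
    interval_cases a
    exacts [⟨(0, 0), rfl⟩, ⟨(0, 1), rfl⟩, ⟨(1, 0), rfl⟩, ⟨(1, 1), rfl⟩]

lemma letter_rotate (c : ZMod 2 × ZMod 2) :
    letter (c.2, -c.1) = Equiv.swap 2 3 (letter c) := by
  revert c
  decide

lemma letter_shear (c : ZMod 2 × ZMod 2) :
    letter (c.1, c.2 + c.1) = Equiv.swap 3 4 (letter c) := by
  revert c
  decide

/-- The word of a pair: the letter `1`, followed by the letters of the columns of the pair. -/
def pairWord {n : ℕ} (p : (Fin n → ZMod 2) × (Fin n → ZMod 2)) : Fin (n + 1) → ℕ :=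
  letter ∘ columns p

section PairWord

variable {n : ℕ}

lemma pairWord_mem_Icc (p : (Fin n → ZMod 2) × (Fin n → ZMod 2)) (i : Fin (n + 1)) :
    pairWord p i ∈ Finset.Icc 1 4 :=
  Finset.mem_Icc.2 (range_letter.subset (Set.mem_range_self (columns p i)))

lemma pairWord_injective :
    Function.Injective (pairWord : (Fin n → ZMod 2) × (Fin n → ZMod 2) → Fin (n + 1) → ℕ) :=
  letter_injective.comp_left.comp columns_injective

lemma range_pairWord :
    Set.range (pairWord : (Fin n → ZMod 2) × (Fin n → ZMod 2) → Fin (n + 1) → ℕ) =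
      {a | a 0 = 1 ∧ ∀ i, a i ∈ Finset.Icc 1 4} := by
  ext a
  constructor
  · rintro ⟨p, rfl⟩
    exact ⟨rfl, pairWord_mem_Icc p⟩
  · rintro ⟨h0, ha⟩
    have hletter (i : Fin n) : a i.succ ∈ Set.range letter := by
      rw [range_letter]
      exact Finset.mem_Icc.1 (ha i.succ)
    choose c hc using hletter
    exact ⟨(fun i => (c i).1, fun i => (c i).2), funext (Fin.cases h0.symm hc)⟩

lemma ker_pairWord (p : (Fin n → ZMod 2) × (Fin n → ZMod 2)) :
    Setoid.ker (pairWord p) = Setoid.ker (columns p) := by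
  ext i j
  exact letter_injective.eq_iff

lemma pairWord_rotate (g k : Fin n → ZMod 2) :
    pairWord (k, -g) = Equiv.swap 2 3 ∘ pairWord (g, k) := by
  rw [pairWord, columns_rotate]
  exact funext fun i => letter_rotate (columns (g, k) i)

lemma pairWord_shear (g k : Fin n → ZMod 2) :
    pairWord (g, k + (1 : ℤ) • g) = Equiv.swap 3 4 ∘ pairWord (g, k) := by
  rw [pairWord, columns_shear]
  simp only [one_smul]
  exact funext fun i => letter_shear (columns (g, k) i)

lemma exists_mk_eq_and_pairWord_eq_swap_comp (p : (Fin n → ZMod 2) × (Fin n → ZMod 2)) {s : ℕ}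
    (hs : 1 < s) (hs' : s + 1 ≤ 4) :
    ∃ q, Quot.mk (pairRel (Fin n → ZMod 2)) q = Quot.mk _ p ∧
      pairWord q = Equiv.swap s (s + 1) ∘ pairWord p := by
  obtain ⟨g, k⟩ := p
  have hrotate : pairRel (Fin n → ZMod 2) (g, k) (k, -g) := Or.inl rfl
  have hshear : pairRel (Fin n → ZMod 2) (g, k) (g, k + (1 : ℤ) • g) := Or.inr ⟨1, rfl⟩
  obtain rfl | rfl : s = 2 ∨ s = 3 := by omega
  · exact ⟨_, (Quot.sound hrotate).symm, pairWord_rotate g k⟩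
  · exact ⟨_, (Quot.sound hshear).symm, pairWord_shear g k⟩

theorem exists_mk_eq_and_isDenseWord (p : (Fin n → ZMod 2) × (Fin n → ZMod 2)) :
    ∃ q, Quot.mk (pairRel (Fin n → ZMod 2)) q = Quot.mk _ p ∧
      IsDenseWord (n + 1) (pairWord q) := by
  let S := pairWord '' {q | Quot.mk (pairRel (Fin n → ZMod 2)) q = Quot.mk _ p}
  have hpos : ∀ a ∈ S, ∀ i, 0 < a i := by
    rintro _ ⟨q, -, rfl⟩ i
    exact (Finset.mem_Icc.1 (pairWord_mem_Icc q i)).1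
  have hbot : ∀ a ∈ S, a ⊥ = 1 := by
    rintro _ ⟨q, -, rfl⟩
    rfl
  have hswap : ∀ a ∈ S, ∀ s > 1, s + 1 ∈ Set.range a → Equiv.swap s (s + 1) ∘ a ∈ S := by
    rintro _ ⟨q, hq, rfl⟩ s hs ⟨i, hi⟩
    have hs' : s + 1 ≤ 4 := hi ▸ (Finset.mem_Icc.1 (pairWord_mem_Icc q i)).2
    obtain ⟨q', hq', hw⟩ := exists_mk_eq_and_pairWord_eq_swap_comp q hs hs'
    exact ⟨q', hq'.trans hq, hw⟩
  have hS : S.Nonempty := ⟨_, p, rfl, rfl⟩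
  obtain ⟨_, ⟨q, hq, rfl⟩, hgrowth⟩ :=
    IsRestrictedGrowth.exists_mem_of_swap_comp_mem hS hpos hbot hswap
  exact ⟨q, hq, isDenseWord_iff.2 ⟨pairWord_mem_Icc q, hgrowth⟩⟩

theorem eq_of_mk_eq_of_isDenseWord {p q : (Fin n → ZMod 2) × (Fin n → ZMod 2)}
    (h : Quot.mk (pairRel (Fin n → ZMod 2)) p = Quot.mk _ q)
    (hp : IsDenseWord (n + 1) (pairWord p)) (hq : IsDenseWord (n + 1) (pairWord q)) : p = q := by
  have hker : Setoid.ker (pairWord p) = Setoid.ker (pairWord q) := by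
    rw [ker_pairWord, ker_pairWord, ker_columns_eq_of_mk_eq h]
  exact pairWord_injective ((isDenseWord_iff.1 hp).2.eq_of_ker_eq (isDenseWord_iff.1 hq).2 hker)

lemma setOf_isDenseWord_eq_image_pairWord :
    {a : Fin (n + 1) → ℕ | IsDenseWord (n + 1) a ∧ a 0 = 1} =
      pairWord '' {p | IsDenseWord (n + 1) (pairWord p)} := by
  ext a
  constructor
  · rintro ⟨ha, h0⟩
    obtain ⟨p, rfl⟩ : a ∈ Set.range pairWord := range_pairWord ▸ ⟨h0, ha.1⟩
    exact ⟨p, ha, rfl⟩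
  · rintro ⟨p, hp, rfl⟩
    exact ⟨hp, rfl⟩

end PairWord

theorem card_denseWords_eq_numClasses (n : ℕ) (hn : 1 ≤ n) :
    Nat.card {a : Fin (n + 1) → ℕ // IsDenseWord (n + 1) a ∧ a 0 = 1} =
      numClasses (Fin n → ZMod 2) := by
  calc
    Nat.card {a : Fin (n + 1) → ℕ // IsDenseWord (n + 1) a ∧ a 0 = 1}
      = Nat.card (pairWord '' {p : (Fin n → ZMod 2) × (Fin n → ZMod 2) |
          IsDenseWord (n + 1) (pairWord p)}) :=
        congrArg (fun S : Set (Fin (n + 1) → ℕ) => Nat.card S) setOf_isDenseWord_eq_image_pairWord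
    _ = Nat.card {p : (Fin n → ZMod 2) × (Fin n → ZMod 2) // IsDenseWord (n + 1) (pairWord p)} :=
        Nat.card_image_of_injective pairWord_injective _
    _ = numClasses (Fin n → ZMod 2) := by
        refine Nat.card_eq_of_bijective (fun p => Quot.mk _ p.1) ⟨?_, ?_⟩
        · rintro ⟨p, hp⟩ ⟨q, hq⟩ hpq
          exact Subtype.ext (eq_of_mk_eq_of_isDenseWord hpq hp hq)
        · rintro ⟨p⟩
          obtain ⟨q, hqp, hq⟩ := exists_mk_eq_and_isDenseWord p
          exact ⟨⟨q, hq⟩, hqp⟩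
end
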